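/- Let Γ be a finite simple graph and let G = G(Γ) be the associated right-angled Artin group. Let N be a finitely generated full normal subgroup of G. Then the center of G/N has finite index in G/N. -/

import Mathlib

/-- The defining relators of a right-angled Artin group: commutators of generators
corresponding to adjacent vertices. -/
def raagRels {V : Type} (Γ : SimpleGraph V) : Set (FreeGroup V) :=
  { r | ∃ v w : V, Γ.Adj v w ∧
      r = FreeGroup.of v * FreeGroup.of w * (FreeGroup.of v)⁻¹ * (FreeGroup.of w)⁻¹ }

/-- The right-angled Artin group associated to the simple graph `Γ`. -/
abbrev RAAG {V : Type} (Γ : SimpleGraph V) : Type := PresentedGroup (raagRels Γ)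

/-- The subgroup `G(Δ)` of the RAAG generated by the vertices in the set `S`. -/
def raagVertexSubgroup {V : Type} (Γ : SimpleGraph V) (S : Set V) : Subgroup (RAAG Γ) :=
  Subgroup.closure { x | ∃ v ∈ S, x = PresentedGroup.of (rels := raagRels Γ) v }

/-- A set of vertices `S` is a join of two (nonempty) subgraphs if it can be split into
two nonempty pieces every two vertices of which (one from each piece) are adjacent. -/
def IsJoinOfTwo {V : Type} (Γ : SimpleGraph V) (S : Set V) : Prop :=
  ∃ A B : Set V, A.Nonempty ∧ B.Nonempty ∧ Disjoint A B ∧ A ∪ B = S ∧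
    ∀ a ∈ A, ∀ b ∈ B, Γ.Adj a b

/-- `P : Fin k → Set V` is a join decomposition of `Γ` into join-indecomposable pieces. -/
def IsJoinDecomposition {V : Type} (Γ : SimpleGraph V) {k : ℕ} (P : Fin k → Set V) : Prop :=
  (∀ i, (P i).Nonempty) ∧ (∀ v : V, ∃! i, v ∈ P i) ∧
    (∀ i j, i ≠ j → ∀ a ∈ P i, ∀ b ∈ P j, Γ.Adj a b) ∧
    (∀ i, ¬ IsJoinOfTwo Γ (P i))

/-- A subgroup `N` of the RAAG is full if for a join decomposition of `Γ` into
join-indecomposable pieces `Γ_1, …, Γ_k`, `N` intersects each `G(Γ_i)` nontrivially. -/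
def IsFullSubgroup {V : Type} (Γ : SimpleGraph V) (N : Subgroup (RAAG Γ)) : Prop :=
  ∀ (k : ℕ) (P : Fin k → Set V), IsJoinDecomposition Γ P →
    ∀ i, N ⊓ raagVertexSubgroup Γ (P i) ≠ ⊥

/-- A group is abelian-by-finite if it has an abelian normal subgroup of finite index. -/
def AbelianByFinite (Q : Type) [Group Q] : Prop :=
  ∃ A : Subgroup Q, A.Normal ∧ A.FiniteIndex ∧ ∀ x y : A, x * y = y * x

/-- A group is finite-by-abelian if it has a finite normal subgroup with abelian quotient,
equivalently a finite normal subgroup containing all commutators. -/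
def FiniteByAbelian (Q : Type) [Group Q] : Prop :=
  ∃ F : Subgroup Q, F.Normal ∧ Finite F ∧ ∀ x y : Q, x * y * x⁻¹ * y⁻¹ ∈ F

/-!
Split `G = G(Γ)` at a vertex `v` as the HNN extension of `G(Γ \ v)` over `G(lk v)` with stable
letter `v`. Deleting the base edge of its Bass–Serre tree leaves a half-tree, recorded here as a
subset of `G`. A normal subgroup `N` not contained in `G(lk v)` contains a hyperbolic element `m`
whose axis crosses the base edge `e`. If `N` is finitely generated, every translate of `e` lies in
one of finitely many `N`-orbits: were `g⁻¹ e` outside the orbits crossed by the generators, all of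
`g N` would lie on one side of `e`, although the powers `m ^ k * g = g * (g⁻¹ * m ^ k * g)` run from
one side to the other. Hence `G(lk v) ⊔ N` has finite index, and as `G(lk v)` centralizes `v`, so
does the centralizer of `v` in `G ⧸ N`. The center is the intersection of these finitely many
centralizers.

Fullness gives `N ≰ G(lk v)`: if `Γ_i` is the join factor of `v`, then `N ∩ G(Γ_i)` would be a
nontrivial subgroup normalized by `G(Γ_i)` and contained in `G(S)` for some `S ⊊ Γ_i`. Britton's
lemma pushes it into `G(S ∩ lk u)` for each `u ∈ Γ_i \ S`, and as `Γ_i` is not a join, `S` can be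
shrunk in this way until it is empty.
-/

section FiniteIndex

variable {G : Type*} [Group G]

theorem finiteIndex_of_forall_exists_mul_mem {K : Subgroup G} (E : Finset G)
    (hE : ∀ g, ∃ w ∈ E, g * w ∈ K) : K.FiniteIndex := by
  have hsurj : Function.Surjective fun w : E => ((w : G) : G ⧸ K) := by
    intro q
    obtain ⟨g, rfl⟩ := QuotientGroup.mk_surjective q
    obtain ⟨w, hw, hmem⟩ := hE g⁻¹
    exact ⟨⟨w, hw⟩, (QuotientGroup.eq.2 hmem).symm⟩
  have : Finite (G ⧸ K) := Finite.of_surjective _ hsurj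
  exact Subgroup.finiteIndex_of_finite_quotient

theorem finiteIndex_centralizer_mk {N : Subgroup G} [N.Normal] {g : G}
    (hg : (Subgroup.centralizer {g} ⊔ N).FiniteIndex) :
    (Subgroup.centralizer {(g : G ⧸ N)}).FiniteIndex := by
  have hmap : ((Subgroup.centralizer {g}).map (QuotientGroup.mk' N)).FiniteIndex := by
    refine ⟨?_⟩
    rw [Subgroup.index_map, QuotientGroup.ker_mk', QuotientGroup.range_mk', Subgroup.index_top,
      mul_one]
    exact hg.index_ne_zero
  have hle := Subgroup.map_centralizer_le_centralizer_image {g} (QuotientGroup.mk' N)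
  rw [Set.image_singleton] at hle
  exact Subgroup.finiteIndex_of_le hle

theorem finiteIndex_center_quotient {N : Subgroup G} [N.Normal] {ι : Type*} [Finite ι] {s : ι → G}
    (hs : Subgroup.closure (Set.range s) = ⊤)
    (hfi : ∀ i, (Subgroup.centralizer {s i} ⊔ N).FiniteIndex) :
    (Subgroup.center (G ⧸ N)).FiniteIndex := by
  have hgen : Subgroup.closure (Set.range fun i => (s i : G ⧸ N)) = ⊤ := by
    have hmap := congrArg (Subgroup.map (QuotientGroup.mk' N)) hs
    rwa [MonoidHom.map_closure, ← Set.range_comp,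
      Subgroup.map_top_of_surjective _ (QuotientGroup.mk'_surjective N)] at hmap
  rw [Subgroup.center_eq_iInf hgen, iInf_range]
  exact Subgroup.finiteIndex_iInf fun i => finiteIndex_centralizer_mk (hfi i)

end FiniteIndex

/-- `H` is a half-tree of the Bass–Serre tree of an HNN extension `G = A *_L` whose stable letter
`t` centralizes `L`. The tree has vertices `g A` and edges joining `g A` to `g t A`; `H` consists of
the `g` for which `g A` lies on the far side of the base edge from `A` to `t A`. The last field says
that the edge from `g A` to `g t A` leads from one side to the other only if it is the base edge. -/
structure IsHalfTree {G : Type*} [Group G] (A L : Subgroup G) (t : G) (H : Set G) : Prop where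
  closure_eq_top : Subgroup.closure (insert t (A : Set G)) = ⊤
  edge_le_base : L ≤ A
  edge_le_centralizer : L ≤ Subgroup.centralizer {t}
  one_notMem : 1 ∉ H
  mul_base_mem_iff : ∀ g, ∀ a ∈ A, (g * a ∈ H ↔ g ∈ H)
  mul_stable_mem_iff : ∀ g, g * t ∈ H ↔ g ∈ H ∨ g ∈ L

namespace IsHalfTree

variable {G : Type*} [Group G] {A L : Subgroup G} {t : G} {H : Set G}

@[elab_as_elim]
theorem induction_right (h : IsHalfTree A L t H) {P : G → Prop} (one : P 1)
    (mul_base : ∀ x, ∀ a ∈ A, P x → P (x * a)) (mul_stable : ∀ x, P x → P (x * t))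
    (mul_stable_inv : ∀ x, P x → P (x * t⁻¹)) (x : G) : P x := by
  have hx : x ∈ Subgroup.closure (insert t (A : Set G)) := by
    rw [h.closure_eq_top]
    exact Subgroup.mem_top x
  induction hx using Subgroup.closure_induction_right with
  | one => exact one
  | mul_right x _ y hy ih =>
    rcases hy with rfl | ha
    · exact mul_stable x ih
    · exact mul_base x y ha ih
  | mul_inv_cancel x _ y hy ih =>
    rcases hy with rfl | ha
    · exact mul_stable_inv x ih
    · exact mul_base x y⁻¹ (A.inv_mem ha) ih

theorem notMem_of_mem_base (h : IsHalfTree A L t H) {a : G} (ha : a ∈ A) : a ∉ H := fun haH =>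
  h.one_notMem ((h.mul_base_mem_iff 1 a ha).1 (by rwa [one_mul]))

theorem notMem_of_mem_edge (h : IsHalfTree A L t H) {l : G} (hl : l ∈ L) : l ∉ H :=
  h.notMem_of_mem_base (h.edge_le_base hl)

theorem mul_edge_mem_iff (h : IsHalfTree A L t H) (g : G) {l : G} (hl : l ∈ L) :
    g * l ∈ H ↔ g ∈ H :=
  h.mul_base_mem_iff g l (h.edge_le_base hl)

theorem stable_mem (h : IsHalfTree A L t H) : t ∈ H := by
  simpa using (h.mul_stable_mem_iff 1).2 (Or.inr L.one_mem)

theorem mul_stable_inv_mem_iff (h : IsHalfTree A L t H) (g : G) :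
    g * t⁻¹ ∈ H ↔ g ∈ H ∧ g * t⁻¹ ∉ L := by
  have hstep := h.mul_stable_mem_iff (g * t⁻¹)
  rw [inv_mul_cancel_right] at hstep
  have hdisj : g * t⁻¹ ∈ L → g * t⁻¹ ∉ H := h.notMem_of_mem_edge
  tauto

theorem commute_stable (h : IsHalfTree A L t H) {l : G} (hl : l ∈ L) : Commute l t :=
  Subgroup.mem_centralizer_singleton_iff.1 (h.edge_le_centralizer hl)

theorem conj_stable_mem_edge_iff (h : IsHalfTree A L t H) (x : G) :
    t * x * t⁻¹ ∈ L ↔ x ∈ L := by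
  refine ⟨fun hx => ?_, fun hx => ?_⟩
  · have hcomm : Commute x t := by simpa [mul_assoc] using (h.commute_stable hx).conj t⁻¹
    rwa [← hcomm.eq, mul_inv_cancel_right] at hx
  · rwa [← (h.commute_stable hx).eq, mul_inv_cancel_right]

/-- The translate of the complement of `H` by `t⁻¹` comes from reversing the base edge. -/
theorem symm (h : IsHalfTree A L t H) : IsHalfTree A L t⁻¹ {x | t * x ∉ H} where
  closure_eq_top := by
    rw [eq_top_iff, ← h.closure_eq_top, Subgroup.closure_le, Set.insert_subset_iff]
    exact ⟨inv_mem_iff.1 (Subgroup.subset_closure (Set.mem_insert _ _)),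
      (Set.subset_insert _ _).trans Subgroup.subset_closure⟩
  edge_le_base := h.edge_le_base
  edge_le_centralizer _ hl :=
    Subgroup.mem_centralizer_singleton_iff.2 (h.commute_stable hl).inv_right
  one_notMem := by simpa using h.stable_mem
  mul_base_mem_iff g a ha := by
    simp only [Set.mem_ofPred_eq, ← mul_assoc, h.mul_base_mem_iff _ a ha]
  mul_stable_mem_iff g := by
    simp only [Set.mem_ofPred_eq, ← mul_assoc]
    rw [h.mul_stable_inv_mem_iff, h.conj_stable_mem_edge_iff]
    tauto

/-- Britton's lemma for words of length two in the stable letter. -/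
theorem mem_edge_of_conj_stable_mem_base (h : IsHalfTree A L t H) {g : G} (hg : g ∈ A)
    (hconj : t * g * t⁻¹ ∈ A) : g ∈ L := by
  have hmem : t * g * t⁻¹ * t ∈ H := by
    rw [inv_mul_cancel_right, h.mul_base_mem_iff _ g hg]
    exact h.stable_mem
  rcases (h.mul_stable_mem_iff _).1 hmem with hH | hL
  · exact absurd hH (h.notMem_of_mem_base hconj)
  · exact (h.conj_stable_mem_edge_iff g).1 hL

theorem base_mul_notMem (h : IsHalfTree A L t H) {a : G} (ha : a ∈ A) (haL : a ∉ L) (x : G) :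
    x ∈ H → a * x ∉ H := by
  induction x using h.induction_right with
  | one => exact fun hone => absurd hone h.one_notMem
  | mul_base x b hb ih => rwa [← mul_assoc, h.mul_base_mem_iff _ b hb, h.mul_base_mem_iff _ b hb]
  | mul_stable x ih =>
    rw [← mul_assoc, h.mul_stable_mem_iff, h.mul_stable_mem_iff]
    rintro (hx | hx) (hax | hax)
    · exact ih hx hax
    · exact h.notMem_of_mem_base ((A.mul_mem_cancel_left ha).1 (h.edge_le_base hax)) hx
    · exact h.notMem_of_mem_base (A.mul_mem ha (h.edge_le_base hx)) hax
    · exact haL ((L.mul_mem_cancel_right hx).1 hax)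
  | mul_stable_inv x ih =>
    rw [← mul_assoc, h.mul_stable_inv_mem_iff, h.mul_stable_inv_mem_iff]
    exact fun hx hax => ih hx.1 hax.1

theorem mul_mem_of_inv_notMem (h : IsHalfTree A L t H) {n : G} (hn : n ∈ H) (hn' : n⁻¹ ∉ H)
    (x : G) : x ∈ H → n * x ∈ H := by
  induction x using h.induction_right with
  | one => exact fun hone => absurd hone h.one_notMem
  | mul_base x b hb ih => rwa [← mul_assoc, h.mul_base_mem_iff _ b hb, h.mul_base_mem_iff _ b hb]
  | mul_stable x ih =>
    rw [← mul_assoc, h.mul_stable_mem_iff, h.mul_stable_mem_iff]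
    rintro (hx | hx)
    · exact Or.inl (ih hx)
    · exact Or.inl ((h.mul_edge_mem_iff n hx).2 hn)
  | mul_stable_inv x ih =>
    intro hx
    rw [← mul_assoc, h.mul_stable_inv_mem_iff]
    refine ⟨ih ((h.mul_stable_inv_mem_iff x).1 hx).1, fun hl => hn' ?_⟩
    rw [← h.mul_edge_mem_iff n⁻¹ hl]
    simpa only [mul_assoc, inv_mul_cancel_left] using hx

theorem mul_mem_of_inv_mem (h : IsHalfTree A L t H) {n : G} (hn : n ∈ H) (hn' : n⁻¹ ∈ H)
    (x : G) : x ∉ H → n * x ∈ H := by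
  induction x using h.induction_right with
  | one => exact fun _ => by rwa [mul_one]
  | mul_base x b hb ih => rwa [← mul_assoc, h.mul_base_mem_iff _ b hb, h.mul_base_mem_iff _ b hb]
  | mul_stable x ih =>
    rw [← mul_assoc, h.mul_stable_mem_iff, h.mul_stable_mem_iff]
    exact fun hx => Or.inl (ih fun hxH => hx (Or.inl hxH))
  | mul_stable_inv x ih =>
    intro hx
    by_cases hl : x * t⁻¹ ∈ L
    · exact (h.mul_edge_mem_iff n hl).2 hn
    · have hxH : x ∉ H := fun hxH => hx ((h.mul_stable_inv_mem_iff x).2 ⟨hxH, hl⟩)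
      rw [← mul_assoc, h.mul_stable_inv_mem_iff]
      refine ⟨ih hxH, fun hnl => hx ?_⟩
      rw [← h.mul_edge_mem_iff n⁻¹ hnl] at hn'
      simpa only [mul_assoc, inv_mul_cancel_left] using hn'

/-- The element `m` is hyperbolic and its axis crosses the base edge. If `n` is not of this kind,
the product of `n` with the conjugate of `n⁻¹` by an element of `A \ L` is. -/
theorem exists_mem_forall_mul_mem (h : IsHalfTree A L t H) (hAL : ¬A ≤ L) {N : Subgroup G}
    [N.Normal] {n : G} (hnN : n ∈ N) (hn : n ∈ H) :
    ∃ m ∈ N, m ∈ H ∧ ∀ x ∈ H, m * x ∈ H := by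
  by_cases hn' : n⁻¹ ∈ H
  · obtain ⟨a, ha, haL⟩ := SetLike.not_le_iff_exists.1 hAL
    have hmul : ∀ x, a⁻¹ * x ∉ H → n * (a * n⁻¹ * a⁻¹) * x ∈ H := by
      intro x hx
      have hconj : a * (n⁻¹ * (a⁻¹ * x)) ∉ H :=
        h.base_mul_notMem ha haL _ (h.mul_mem_of_inv_mem hn' (by rwa [inv_inv]) _ hx)
      simpa only [mul_assoc] using h.mul_mem_of_inv_mem hn hn' _ hconj
    refine ⟨n * (a * n⁻¹ * a⁻¹),
      N.mul_mem hnN (Subgroup.Normal.conj_mem inferInstance _ (N.inv_mem hnN) a), ?_,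
      fun x hx => ?_⟩
    · simpa only [mul_one] using
        hmul 1 (h.notMem_of_mem_base (A.mul_mem (A.inv_mem ha) A.one_mem))
    · exact hmul x (h.base_mul_notMem (A.inv_mem ha) (mt inv_mem_iff.1 haL) x hx)
  · exact ⟨n, hnN, hn, h.mul_mem_of_inv_notMem hn hn'⟩

theorem pow_mul_mem {m : G} (hmH : ∀ x ∈ H, m * x ∈ H) (k : ℕ) {x : G} (hx : x ∈ H) :
    m ^ k * x ∈ H := by
  induction k with
  | zero => simpa using hx
  | succ k ih =>
    rw [pow_succ', mul_assoc]
    exact hmH _ ih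

theorem zpow_mem_iff (h : IsHalfTree A L t H) {m : G} (hm : m ∈ H) (hmH : ∀ x ∈ H, m * x ∈ H)
    (k : ℤ) : m ^ k ∈ H ↔ 0 < k := by
  refine ⟨fun hk => ?_, fun hk => ?_⟩
  · by_contra! hneg
    obtain ⟨j, rfl⟩ := Int.exists_eq_neg_ofNat hneg
    exact h.one_notMem (by simpa using pow_mul_mem hmH j hk)
  · obtain ⟨j, rfl⟩ := Int.exists_add_of_le hk
    have hmem := pow_mul_mem hmH j hm
    rw [← pow_succ, ← zpow_natCast] at hmem
    simpa [add_comm] using hmem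

theorem eq_zero_of_zpow_mem_edge (h : IsHalfTree A L t H) {m : G} (hm : m ∈ H)
    (hmH : ∀ x ∈ H, m * x ∈ H) {k : ℤ} (hk : m ^ k ∈ L) : k = 0 := by
  have hpos : ¬0 < k := mt (h.zpow_mem_iff hm hmH k).2 (h.notMem_of_mem_edge hk)
  have hneg : ¬0 < -k := mt (h.zpow_mem_iff hm hmH (-k)).2
    (h.notMem_of_mem_edge (by rw [zpow_neg]; exact L.inv_mem hk))
  omega

/-- The path from `A` to `x A` has finitely many edges, from `w A` to `w t A` with `w ∈ F`; the base
edge separates `g A` from `g x A` only if it is the `g`-translate of one of them. -/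
theorem exists_finset_mul_mem_iff (h : IsHalfTree A L t H) (x : G) :
    ∃ F : Finset G, ∀ g, (∀ w ∈ F, g * w ∉ L) → (g * x ∈ H ↔ g ∈ H) := by
  classical
  induction x using h.induction_right with
  | one => exact ⟨∅, by simp⟩
  | mul_base x a ha ih =>
    obtain ⟨F, hF⟩ := ih
    refine ⟨F, fun g hg => ?_⟩
    rw [← mul_assoc, h.mul_base_mem_iff _ a ha, hF g hg]
  | mul_stable x ih =>
    obtain ⟨F, hF⟩ := ih
    refine ⟨insert x F, fun g hg => ?_⟩
    rw [Finset.forall_mem_insert] at hg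
    rw [← mul_assoc, h.mul_stable_mem_iff, hF g hg.2, or_iff_left hg.1]
  | mul_stable_inv x ih =>
    obtain ⟨F, hF⟩ := ih
    refine ⟨insert (x * t⁻¹) F, fun g hg => ?_⟩
    rw [Finset.forall_mem_insert, ← mul_assoc] at hg
    rw [← mul_assoc, h.mul_stable_inv_mem_iff, hF g hg.2, and_iff_left hg.1]

open Filter in
theorem eventually_zpow_mul_mem_iff (h : IsHalfTree A L t H) {m : G} (hm : m ∈ H)
    (hmH : ∀ x ∈ H, m * x ∈ H) (x : G) : ∀ᶠ k : ℤ in cofinite, (m ^ k * x ∈ H ↔ 0 < k) := by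
  obtain ⟨F, hF⟩ := h.exists_finset_mul_mem_iff x
  have hsub : ∀ w, {k : ℤ | m ^ k * w ∈ L}.Subsingleton := by
    intro w j hj k hk
    have hmem : m ^ (j - k) ∈ L := by
      have := L.mul_mem hj (L.inv_mem hk)
      rwa [mul_inv_rev, mul_assoc, mul_inv_cancel_left, ← zpow_neg, ← zpow_add,
        ← sub_eq_add_neg] at this
    exact sub_eq_zero.1 (h.eq_zero_of_zpow_mem_edge hm hmH hmem)
  have hev : ∀ᶠ k : ℤ in cofinite, ∀ w ∈ F, m ^ k * w ∉ L :=
    (eventually_all_finset F).2 fun w _ => (hsub w).finite.eventually_cofinite_notMem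
  filter_upwards [hev] with k hk
  rw [hF _ hk, h.zpow_mem_iff hm hmH]

/-- `E` collects the edges crossed by the generators of `N`; the condition on `g` depends only on
the coset `g N`. -/
theorem exists_finset_mul_mem_iff_of_fg (h : IsHalfTree A L t H) {N : Subgroup G} [N.Normal]
    (hfg : N.FG) : ∃ E : Finset G, ∀ g, (∀ w ∈ E, g * w ∉ L ⊔ N) → ∀ n ∈ N,
      (g * n ∈ H ↔ g ∈ H) := by
  classical
  obtain ⟨X, rfl⟩ := hfg
  set N := Subgroup.closure (X : Set G)
  choose F hF using h.exists_finset_mul_mem_iff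
  have mul_right : ∀ g, (∀ w ∈ X.biUnion F, g * w ∉ L ⊔ N) → ∀ n ∈ N,
      ∀ w ∈ X.biUnion F, g * n * w ∉ L ⊔ N := by
    intro g hg n hn w hw hmem
    have hconj : w⁻¹ * n * w ∈ L ⊔ N :=
      (le_sup_right : N ≤ L ⊔ N) (Subgroup.Normal.conj_mem' inferInstance n hn w)
    refine hg w hw (((L ⊔ N).mul_mem_cancel_right hconj).1 ?_)
    simpa only [mul_assoc, mul_inv_cancel_left] using hmem
  refine ⟨X.biUnion F, fun g hg n hn => ?_⟩
  induction hn using Subgroup.closure_induction generalizing g with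
  | mem x hx =>
    refine hF x g fun w hw hl => hg w (Finset.mem_biUnion.2 ⟨x, hx, hw⟩) ?_
    exact (le_sup_left : L ≤ L ⊔ N) hl
  | one => rw [mul_one]
  | mul x y hx _ ihx ihy => rw [← mul_assoc, ihy _ (mul_right g hg x hx), ihx g hg]
  | inv x hx ih =>
    have hstep := ih _ (mul_right g hg x⁻¹ (inv_mem hx))
    rwa [inv_mul_cancel_right, iff_comm] at hstep

theorem finiteIndex_edge_sup_of_mem (h : IsHalfTree A L t H) (hAL : ¬A ≤ L) {N : Subgroup G}
    [N.Normal] (hfg : N.FG) {n : G} (hnN : n ∈ N) (hn : n ∈ H) : (L ⊔ N).FiniteIndex := by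
  obtain ⟨m, hmN, hm, hmH⟩ := h.exists_mem_forall_mul_mem hAL hnN hn
  obtain ⟨E, hE⟩ := h.exists_finset_mul_mem_iff_of_fg hfg
  refine finiteIndex_of_forall_exists_mul_mem E fun g => ?_
  by_contra! hg
  have hside : ∀ k : ℤ, m ^ k * g ∈ H ↔ g ∈ H := by
    intro k
    have hconj : g⁻¹ * m ^ k * g ∈ N :=
      Subgroup.Normal.conj_mem' inferInstance _ (N.zpow_mem hmN k) g
    simpa only [mul_assoc, mul_inv_cancel_left] using hE g hg _ hconj
  have hev := h.eventually_zpow_mul_mem_iff hm hmH g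
  simp only [hside, Int.cofinite_eq, Filter.eventually_sup] at hev
  obtain ⟨p, hp, hp_pos⟩ := (hev.2.and (Filter.eventually_gt_atTop 0)).exists
  obtain ⟨q, hq, hq_neg⟩ := (hev.1.and (Filter.eventually_lt_atBot 0)).exists
  exact hq_neg.not_gt (hq.1 (hp.2 hp_pos))

theorem finiteIndex_edge_sup (h : IsHalfTree A L t H) (hAL : ¬A ≤ L) {N : Subgroup G} [N.Normal]
    (hfg : N.FG) (hNL : ¬N ≤ L) : (L ⊔ N).FiniteIndex := by
  by_cases hNH : ∃ n ∈ N, n ∈ H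
  · obtain ⟨n, hnN, hn⟩ := hNH
    exact h.finiteIndex_edge_sup_of_mem hAL hfg hnN hn
  · push Not at hNH
    obtain ⟨n, hnN, hnL⟩ := SetLike.not_le_iff_exists.1 hNL
    have hside : t * (t⁻¹ * n * t) ∉ H := by
      rw [← mul_assoc, mul_inv_cancel_left, h.mul_stable_mem_iff]
      exact not_or_intro (hNH n hnN) hnL
    exact h.symm.finiteIndex_edge_sup_of_mem hAL hfg
      (Subgroup.Normal.conj_mem' inferInstance n hnN t) hside

theorem finiteIndex_centralizer_sup (h : IsHalfTree A L t H) {N : Subgroup G} [N.Normal]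
    (hfg : N.FG) (hNL : ¬N ≤ L) : (Subgroup.centralizer {t} ⊔ N).FiniteIndex := by
  by_cases hAL : A ≤ L
  · have htop : Subgroup.centralizer {t} = ⊤ := by
      rw [eq_top_iff, ← h.closure_eq_top, Subgroup.closure_le, Set.insert_subset_iff]
      exact ⟨Subgroup.mem_centralizer_singleton_iff.2 rfl, hAL.trans h.edge_le_centralizer⟩
    rw [htop, top_sup_eq]
    infer_instance
  · have := h.finiteIndex_edge_sup hAL hfg hNL
    exact Subgroup.finiteIndex_of_le (sup_le_sup_right h.edge_le_centralizer N)

end IsHalfTree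

section JoinDecomposition

variable {V : Type} {Γ : SimpleGraph V}

theorem not_isJoinOfTwo_supp (C : Γᶜ.ConnectedComponent) : ¬IsJoinOfTwo Γ C.supp := by
  rintro ⟨A, B, ⟨a, ha⟩, ⟨b, hb⟩, hdisj, hunion, hadj⟩
  have haC : a ∈ C.supp := hunion ▸ Or.inl ha
  have hbC : b ∈ C.supp := hunion ▸ Or.inr hb
  obtain ⟨p⟩ := SimpleGraph.ConnectedComponent.exact (haC.trans hbC.symm)
  obtain ⟨d, -, hd_fst, hd_snd⟩ :=
    p.exists_boundary_dart A ha (Set.disjoint_right.1 hdisj hb)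
  have hd_mem : d.snd ∈ A ∪ B := by
    rw [hunion, ← C.mem_supp_congr_adj d.adj, ← hunion]
    exact Or.inl hd_fst
  exact d.adj.2 (hadj _ hd_fst _ (hd_mem.resolve_left hd_snd))

theorem isJoinDecomposition_supp {k : ℕ} (e : Fin k ≃ Γᶜ.ConnectedComponent) :
    IsJoinDecomposition Γ fun i => (e i).supp := by
  refine ⟨fun i => (e i).nonempty_supp, fun v => ?_, fun i j hij a ha b hb => ?_,
    fun i => not_isJoinOfTwo_supp (e i)⟩
  · refine ⟨e.symm (Γᶜ.connectedComponentMk v), ?_, fun j hj => ?_⟩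
    · simp
    · exact (e.symm_apply_eq.2 hj).symm
  · by_contra hadj
    have hne : a ≠ b := by
      rintro rfl
      exact hij (e.injective (ha.symm.trans hb))
    have hadj' : Γᶜ.Adj a b := ⟨hne, hadj⟩
    exact hij (e.injective ((((e i).mem_supp_congr_adj hadj').1 ha).symm.trans hb))

theorem IsFullSubgroup.inf_vertexSubgroup_supp_ne_bot [Finite V] {N : Subgroup (RAAG Γ)}
    (hfull : IsFullSubgroup Γ N) (C : Γᶜ.ConnectedComponent) :
    N ⊓ raagVertexSubgroup Γ C.supp ≠ ⊥ := by
  obtain ⟨k, ⟨e⟩⟩ := Finite.exists_equiv_fin Γᶜ.ConnectedComponent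
  simpa using hfull k _ (isJoinDecomposition_supp e.symm) (e C)

end JoinDecomposition

namespace RAAG

variable {V : Type} (Γ : SimpleGraph V)

/-- The generator of the right-angled Artin group given by a vertex. -/
abbrev of (v : V) : RAAG Γ := PresentedGroup.of v

theorem closure_range_of : Subgroup.closure (Set.range (of Γ)) = ⊤ :=
  PresentedGroup.closure_range_of _

variable {Γ}

theorem commute_of {v w : V} (h : Γ.Adj v w) : Commute (of Γ v) (of Γ w) := by
  have hrel : PresentedGroup.mk (raagRels Γ) _ = 1 := PresentedGroup.one_of_mem ⟨v, w, h, rfl⟩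
  rw [map_mul, mul_eq_one_iff_eq_inv, map_inv, inv_inv, map_mul, map_inv,
    mul_inv_eq_iff_eq_mul, map_mul] at hrel
  exact hrel

/-- The homomorphism out of a right-angled Artin group given by its universal property. -/
def lift {K : Type*} [Group K] (f : V → K) (hf : ∀ v w, Γ.Adj v w → Commute (f v) (f w)) :
    RAAG Γ →* K :=
  PresentedGroup.toGroup (f := f) (by
    rintro _ ⟨v, w, h, rfl⟩
    simp [(hf v w h).eq])

@[simp]
theorem lift_of {K : Type*} [Group K] {f : V → K} (hf : ∀ v w, Γ.Adj v w → Commute (f v) (f w))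
    (v : V) : lift f hf (of Γ v) = f v :=
  PresentedGroup.toGroup.of _

theorem of_mem_vertexSubgroup {S : Set V} {v : V} (hv : v ∈ S) :
    of Γ v ∈ raagVertexSubgroup Γ S :=
  Subgroup.subset_closure ⟨v, hv, rfl⟩

theorem vertexSubgroup_le_iff {S : Set V} {K : Subgroup (RAAG Γ)} :
    raagVertexSubgroup Γ S ≤ K ↔ ∀ v ∈ S, of Γ v ∈ K := by
  refine ⟨fun h v hv => h (of_mem_vertexSubgroup hv), fun h => (Subgroup.closure_le K).2 ?_⟩
  rintro _ ⟨v, hv, rfl⟩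
  exact h v hv

theorem vertexSubgroup_mono {S T : Set V} (h : S ⊆ T) :
    raagVertexSubgroup Γ S ≤ raagVertexSubgroup Γ T :=
  vertexSubgroup_le_iff.2 fun _ hv => of_mem_vertexSubgroup (h hv)

theorem vertexSubgroup_empty : raagVertexSubgroup Γ ∅ = ⊥ :=
  le_bot_iff.1 (vertexSubgroup_le_iff.2 fun _ hv => hv.elim)

/-- The canonical retraction of `G(Γ)` onto `G(S)`, killing the vertices outside `S`. -/
noncomputable def retraction (S : Set V) : RAAG Γ →* RAAG Γ :=
  lift (S.mulIndicator (of Γ)) fun v w h => by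
    classical
    simp only [Set.mulIndicator_apply]
    split_ifs <;> simp [commute_of h]

theorem retraction_apply_of_mem {S : Set V} {x : RAAG Γ} (hx : x ∈ raagVertexSubgroup Γ S) :
    retraction S x = x := by
  have hle : raagVertexSubgroup Γ S ≤ (retraction S).eqLocus (MonoidHom.id _) :=
    vertexSubgroup_le_iff.2 fun v hv => (lift_of _ v).trans (Set.mulIndicator_of_mem hv _)
  exact hle hx

theorem retraction_mem_vertexSubgroup_inter (S : Set V) {T : Set V} {x : RAAG Γ}
    (hx : x ∈ raagVertexSubgroup Γ T) : retraction S x ∈ raagVertexSubgroup Γ (S ∩ T) := by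
  have hle : raagVertexSubgroup Γ T ≤ (raagVertexSubgroup Γ (S ∩ T)).comap (retraction S) := by
    refine vertexSubgroup_le_iff.2 fun v hvT => ?_
    rw [Subgroup.mem_comap, retraction, lift_of]
    by_cases hvS : v ∈ S
    · rw [Set.mulIndicator_of_mem hvS]
      exact of_mem_vertexSubgroup ⟨hvS, hvT⟩
    · rw [Set.mulIndicator_of_notMem hvS]
      exact Subgroup.one_mem _
  exact hle hx

theorem vertexSubgroup_inf_le (S T : Set V) :
    raagVertexSubgroup Γ S ⊓ raagVertexSubgroup Γ T ≤ raagVertexSubgroup Γ (S ∩ T) := by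
  rintro x ⟨hS, hT⟩
  rw [← retraction_apply_of_mem hS]
  exact retraction_mem_vertexSubgroup_inter S hT

theorem vertexSubgroup_neighborSet_le_centralizer (v : V) :
    raagVertexSubgroup Γ (Γ.neighborSet v) ≤ Subgroup.centralizer {of Γ v} :=
  vertexSubgroup_le_iff.2 fun _ hw =>
    Subgroup.mem_centralizer_singleton_iff.2 (commute_of hw).symm.eq

open scoped Classical in
/-- The lift of `w` to `ℤˣ ≀ᵣ G(Γ)` used to define `crossing v`. -/
noncomputable def crossingGen (v w : V) : ℤˣ ≀ᵣ RAAG Γ where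
  left g := if w = v ∧ g ∈ raagVertexSubgroup Γ (Γ.neighborSet v) then -1 else 1
  right := of Γ w

theorem crossingGen_of_ne {v w : V} (h : w ≠ v) :
    crossingGen v w = RegularWreathProduct.inl (of Γ w) := by
  ext <;> simp [crossingGen, h]

open scoped Classical in
theorem crossingGen_self_left (v : V) (g : RAAG Γ) : (crossingGen v v).left g =
    if g ∈ raagVertexSubgroup Γ (Γ.neighborSet v) then -1 else 1 := by
  simp only [crossingGen, true_and]

theorem commute_crossingGen_self {v w : V} (h : Γ.Adj v w) :
    Commute (crossingGen (Γ := Γ) v v) (crossingGen v w) := by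
  have hw : (of Γ w)⁻¹ ∈ raagVertexSubgroup Γ (Γ.neighborSet v) :=
    inv_mem (of_mem_vertexSubgroup h)
  rw [crossingGen_of_ne h.ne']
  refine RegularWreathProduct.ext (funext fun g => ?_) (commute_of h).eq
  have hmem : (of Γ w)⁻¹ * g ∈ raagVertexSubgroup Γ (Γ.neighborSet v) ↔
      g ∈ raagVertexSubgroup Γ (Γ.neighborSet v) := Subgroup.mul_mem_cancel_left _ hw
  classical
  simpa [crossingGen_self_left] using if_congr hmem.symm rfl rfl

theorem commute_crossingGen (v : V) {a b : V} (h : Γ.Adj a b) :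
    Commute (crossingGen (Γ := Γ) v a) (crossingGen v b) := by
  by_cases ha : a = v
  · subst ha
    exact commute_crossingGen_self h
  · by_cases hb : b = v
    · subst hb
      exact (commute_crossingGen_self h.symm).symm
    · rw [crossingGen_of_ne ha, crossingGen_of_ne hb]
      exact (commute_of h).map _

/-- The lift of `G(Γ)` to the wreath product `ℤˣ ≀ᵣ G(Γ)` whose component `(crossing v g).left x` is
the parity of the number of times the path from `x⁻¹ A` to `x⁻¹ g A` crosses the base edge, in the
Bass–Serre tree of `G(Γ)` over `A = G(Γ \ v)`. -/
noncomputable def crossing (v : V) : RAAG Γ →* ℤˣ ≀ᵣ RAAG Γ :=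
  lift (crossingGen v) fun _ _ h => commute_crossingGen v h

theorem crossing_right (v : V) (g : RAAG Γ) : (crossing v g).right = g := by
  have hid : RegularWreathProduct.rightHom.comp (crossing (Γ := Γ) v) = MonoidHom.id _ :=
    PresentedGroup.ext fun w => congrArg RegularWreathProduct.right (lift_of _ w)
  exact DFunLike.congr_fun hid g

theorem crossing_eq_inl {v : V} {a : RAAG Γ} (ha : a ∈ raagVertexSubgroup Γ {v}ᶜ) :
    crossing v a = RegularWreathProduct.inl a := by
  have hle : raagVertexSubgroup Γ {v}ᶜ ≤ (crossing v).eqLocus RegularWreathProduct.inl :=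
    vertexSubgroup_le_iff.2 fun w hw => (lift_of _ w).trans (crossingGen_of_ne hw)
  exact hle ha

theorem crossing_mul_left_one (v : V) (g k : RAAG Γ) :
    (crossing v (g * k)).left 1 = (crossing v g).left 1 * (crossing v k).left g⁻¹ := by
  simp [crossing_right]

theorem crossing_mul_base_left_one (v : V) (g : RAAG Γ) {a : RAAG Γ}
    (ha : a ∈ raagVertexSubgroup Γ {v}ᶜ) :
    (crossing v (g * a)).left 1 = (crossing v g).left 1 := by
  rw [crossing_mul_left_one, crossing_eq_inl ha, RegularWreathProduct.left_inl, Pi.one_apply,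
    mul_one]

open scoped Classical in
theorem crossing_mul_of_self_left_one (v : V) (g : RAAG Γ) :
    (crossing v (g * of Γ v)).left 1 = (crossing v g).left 1 *
      if g ∈ raagVertexSubgroup Γ (Γ.neighborSet v) then -1 else 1 := by
  rw [crossing_mul_left_one, crossing, lift_of, crossingGen_self_left]
  simp only [inv_mem_iff]

theorem exists_isHalfTree (v : V) : ∃ H : Set (RAAG Γ), IsHalfTree (raagVertexSubgroup Γ {v}ᶜ)
    (raagVertexSubgroup Γ (Γ.neighborSet v)) (of Γ v) H := by
  have hle : raagVertexSubgroup Γ (Γ.neighborSet v) ≤ raagVertexSubgroup Γ {v}ᶜ :=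
    vertexSubgroup_mono fun w hw => (show Γ.Adj v w from hw).ne'
  refine ⟨{g | (crossing v g).left 1 = -1}, ?_, hle, vertexSubgroup_neighborSet_le_centralizer v,
    ?_, fun g a ha => ?_, fun g => ?_⟩
  · rw [eq_top_iff, ← closure_range_of, Subgroup.closure_le]
    rintro _ ⟨w, rfl⟩
    by_cases hw : w = v
    · subst hw
      exact Subgroup.subset_closure (Set.mem_insert _ _)
    · exact Subgroup.subset_closure (Set.mem_insert_of_mem _ (of_mem_vertexSubgroup hw))
  · simp
  · rw [Set.mem_ofPred_eq, crossing_mul_base_left_one v g ha, Set.mem_ofPred_eq]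
  · rw [Set.mem_ofPred_eq, crossing_mul_of_self_left_one, Set.mem_ofPred_eq]
    by_cases hg : g ∈ raagVertexSubgroup Γ (Γ.neighborSet v)
    · simp [hg, crossing_eq_inl (hle hg)]
    · simp [hg]

theorem eq_bot_of_le_vertexSubgroup {P : Set V} (hP : ¬IsJoinOfTwo Γ P) {M : Subgroup (RAAG Γ)}
    (hnorm : raagVertexSubgroup Γ P ≤ Subgroup.normalizer M) {S : Set V} (hS : S.Finite)
    (hSP : S ⊂ P) (hMS : M ≤ raagVertexSubgroup Γ S) : M = ⊥ := by
  induction hcard : S.ncard using Nat.strong_induction_on generalizing S with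
  | _ n ih =>
    rcases S.eq_empty_or_nonempty with rfl | hne
    · rwa [vertexSubgroup_empty, le_bot_iff] at hMS
    · obtain ⟨s, hs, u, ⟨huP, huS⟩, hsu⟩ : ∃ s ∈ S, ∃ u ∈ P \ S, ¬Γ.Adj s u := by
        by_contra! hjoin
        exact hP ⟨S, P \ S, hne, Set.nonempty_of_ssubset hSP, Set.disjoint_sdiff_right,
          Set.union_sdiff_cancel hSP.1, hjoin⟩
      have hlink : M ≤ raagVertexSubgroup Γ (Γ.neighborSet u) := by
        obtain ⟨H, h⟩ := exists_isHalfTree (Γ := Γ) u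
        have hbase : M ≤ raagVertexSubgroup Γ {u}ᶜ :=
          hMS.trans (vertexSubgroup_mono (Set.subset_compl_singleton_iff.2 huS))
        intro x hx
        exact h.mem_edge_of_conj_stable_mem_base (hbase hx) (hbase
          (Subgroup.le_normalizer_iff.1 hnorm _ (of_mem_vertexSubgroup huP) x hx))
      have hlt : S ∩ Γ.neighborSet u ⊂ S :=
        ⟨Set.inter_subset_left, fun hsub => hsu (hsub hs).2.symm⟩
      exact ih _ (hcard ▸ Set.ncard_lt_ncard hlt hS) (hS.subset hlt.1)
        (hlt.trans_subset hSP.1) ((le_inf hMS hlink).trans (vertexSubgroup_inf_le _ _)) rfl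

end RAAG

theorem IsFullSubgroup.not_le_vertexSubgroup_neighborSet {V : Type} [Finite V]
    {Γ : SimpleGraph V} {N : Subgroup (RAAG Γ)} [N.Normal] (hfull : IsFullSubgroup Γ N) (v : V) :
    ¬N ≤ raagVertexSubgroup Γ (Γ.neighborSet v) := by
  intro hle
  set P := (Γᶜ.connectedComponentMk v).supp
  have hnorm : raagVertexSubgroup Γ P ≤
      Subgroup.normalizer (N ⊓ raagVertexSubgroup Γ P : Subgroup (RAAG Γ)) :=
    (le_inf Subgroup.le_normalizer_of_normal Subgroup.le_normalizer).trans
      Subgroup.inf_normalizer_le_normalizer_inf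
  have hssub : P ∩ Γ.neighborSet v ⊂ P :=
    ⟨Set.inter_subset_left, fun hsub =>
      Γ.irrefl (hsub SimpleGraph.ConnectedComponent.connectedComponentMk_mem).2⟩
  have hlink : N ⊓ raagVertexSubgroup Γ P ≤ raagVertexSubgroup Γ (P ∩ Γ.neighborSet v) :=
    (le_inf inf_le_right (inf_le_left.trans hle)).trans (RAAG.vertexSubgroup_inf_le _ _)
  exact hfull.inf_vertexSubgroup_supp_ne_bot _ (RAAG.eq_bot_of_le_vertexSubgroup
    (not_isJoinOfTwo_supp _) hnorm (Set.toFinite _) hssub hlink)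

theorem center_of_quotient_of_RAAG_by_fg_full_normal_subgroup_has_finite_index
    {V : Type} [Fintype V] (Γ : SimpleGraph V)
    (N : Subgroup (RAAG Γ)) [N.Normal]
    (hfg : N.FG) (hfull : IsFullSubgroup Γ N) :
    (Subgroup.center (RAAG Γ ⧸ N)).FiniteIndex := by
  refine finiteIndex_center_quotient (RAAG.closure_range_of Γ) fun v => ?_
  obtain ⟨H, h⟩ := RAAG.exists_isHalfTree (Γ := Γ) v
  exact h.finiteIndex_centralizer_sup hfg (hfull.not_le_vertexSubgroup_neighborSet v)
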